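/- Let A be an n×n complex Hermitian matrix with n ≥ 1 and let r ≥ 1 be an integer. Then the polynomial f(x) = Σ_{X ∈ P_r} χ[A_X](x), the sum of the characteristic polynomials of all r-pavings of A, has all of its complex roots real; moreover there exists an ordered partition X ∈ P_r such that the largest root of χ[A_X] is at most the largest root of f. -/

import Mathlib

open Polynomial Matrix

/-- The `r`-paving of `A` determined by the colouring `c : Fin n → Fin r` (i.e. by the
ordered partition of `{1,…,n}` into the fibres of `c`): entries within a block are kept,
all other entries are set to zero. -/
def paving {n r : ℕ} (A : Matrix (Fin n) (Fin n) ℂ) (c : Fin n → Fin r) :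
    Matrix (Fin n) (Fin n) ℂ :=
  Matrix.of fun i j => if c i = c j then A i j else 0

/-!
For Hermitian `A` and `z` in the open upper half-plane, the quadratic form of `z - A` has positive
imaginary part, so all principal minors of `z - A` are nonzero. This persists when a diagonal entry
is moved upwards; since minors are affine in each diagonal entry, the same holds for sums of minors
over random transversals of a family of disjoint blocks, and fixing the element chosen in a block
multiplies the sum without that block by a function mapping the upper half-plane to itself.
Consequently the polynomials obtained from the different choices in one block have a common
interlacer, so that the largest root of one of them is at most the largest root of their sum.
Choosing the elements block by block proves the statement for all transversals. Pavings of `A` are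
the principal submatrices on transversals of the block diagonal matrix with `r` copies of `A`,
with one block `{(i, k) | k}` for each index `i`.
-/

open Filter Function

section PrincipalMinor

variable {α R : Type*} [DecidableEq α] [CommRing R]

/-- The principal minor of `M` on the rows and columns in `Y`. -/
def principalMinor (M : Matrix α α R) (Y : Finset α) : R :=
  (M.submatrix (↑) (↑) : Matrix Y Y R).det

lemma principalMinor_add_single_insert [Finite α] (M : Matrix α α R) {Y : Finset α} {p : α}
    (hp : p ∉ Y) (w : R) :
    principalMinor (M + single p p w) (insert p Y) =
      principalMinor M (insert p Y) + w * principalMinor M Y := by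
  have := Fintype.ofFinite α
  set N : Matrix α α R := of (Y.piecewise M.row (1 : Matrix α α R).row) with hN
  have minor_insert (M' : Matrix α α R) (h : ∀ q ∈ Y, M'.row q = M.row q) :
      principalMinor M' (insert p Y) = (N.updateRow p (M' p)).det := by
    have hY : Y.piecewise M'.row (1 : Matrix α α R).row = N :=
      Finset.piecewise_congr Y h fun _ _ => rfl
    rw [principalMinor, ← det_piecewise_one_eq_submatrix_det, Finset.piecewise_insert, hY]
    rfl
  have hNp : N p = (1 : Matrix α α R) p := Finset.piecewise_eq_of_notMem _ _ _ hp
  have hrow : (M + single p p w) p = M p + w • N p := by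
    ext q
    simp [hNp, single_apply, one_apply]
  rw [minor_insert _ fun q hq => ?_, minor_insert M fun _ _ => rfl, hrow, det_updateRow_add,
    det_updateRow_smul, updateRow_eq_self, hN, det_piecewise_one_eq_submatrix_det,
    ← principalMinor]
  have hqp : p ≠ q := fun h => hp (h ▸ hq)
  ext
  simp [hqp]

lemma charpoly_submatrix_image_univ {ι : Type*} [Fintype ι] [DecidableEq ι] (M : Matrix α α R)
    {e : ι → α} (he : Injective e) :
    (M.submatrix (↑) (↑) : Matrix (Finset.univ.image e) (Finset.univ.image e) R).charpoly =
      (M.submatrix e e).charpoly := by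
  let E : ι ≃ Finset.univ.image e :=
    .ofBijective (fun i => ⟨e i, Finset.mem_image_of_mem e (Finset.mem_univ i)⟩)
      ⟨fun _ _ h => he (congrArg Subtype.val h), fun ⟨_, hx⟩ => by simpa using hx⟩
  rw [← charpoly_reindex E.symm]
  rfl

end PrincipalMinor

section StrictlyDissipative

variable {α : Type*} [Fintype α]

/-- A complex matrix is strictly dissipative if its quadratic form maps nonzero vectors into the
open upper half-plane, i.e. if its skew-Hermitian part is `i` times a positive definite matrix. -/
def StrictlyDissipative (M : Matrix α α ℂ) : Prop :=
  ∀ v : α → ℂ, v ≠ 0 → 0 < (star v ⬝ᵥ M *ᵥ v).im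

variable [DecidableEq α] {M : Matrix α α ℂ}

lemma StrictlyDissipative.principalMinor_ne_zero (hM : StrictlyDissipative M) (Y : Finset α) :
    principalMinor M Y ≠ 0 := by
  rw [principalMinor, ← det_piecewise_one_eq_submatrix_det]
  intro hdet
  obtain ⟨v, hv, hNv⟩ := exists_mulVec_eq_zero_iff.mpr hdet
  refine (hM v hv).ne' ?_
  suffices star v ⬝ᵥ M *ᵥ v = 0 by rw [this, Complex.zero_im]
  refine Finset.sum_eq_zero fun p _ => ?_
  have hp := congrFun hNv p
  by_cases hpY : p ∈ Y
  · have : (M *ᵥ v) p = 0 := by simpa [mulVec, hpY] using hp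
    rw [this, mul_zero]
  · have : v p = 0 := by simpa [mulVec, dotProduct, one_apply, hpY] using hp
    simp [this]

lemma StrictlyDissipative.add_single (hM : StrictlyDissipative M) (p : α) {w : ℂ}
    (hw : 0 ≤ w.im) : StrictlyDissipative (M + single p p w) := by
  intro v hv
  have hsingle : star v ⬝ᵥ single p p w *ᵥ v = w * (Complex.normSq (v p) : ℂ) := by
    rw [single_mulVec, ← Pi.single, dotProduct_single, Complex.normSq_eq_conj_mul_self,
      Pi.star_apply, RCLike.star_def]
    ring
  rw [add_mulVec, dotProduct_add, hsingle, Complex.add_im, Complex.im_mul_ofReal]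
  exact add_pos_of_pos_of_nonneg (hM v hv) (mul_nonneg hw (Complex.normSq_nonneg _))

open scoped ComplexOrder in
lemma strictlyDissipative_scalar_sub {B : Matrix α α ℂ} (hB : B.IsHermitian)
    {z : ℂ} (hz : 0 < z.im) : StrictlyDissipative (scalar α z - B) := by
  intro v hv
  have hBv : (star v ⬝ᵥ B *ᵥ v).im = 0 := hB.im_star_dotProduct_mulVec_self v
  have hv' : 0 < star v ⬝ᵥ v := dotProduct_star_self_pos_iff.mpr hv
  obtain ⟨hre, him⟩ := Complex.pos_iff.mp hv'
  rw [sub_mulVec, dotProduct_sub, Complex.sub_im, hBv, sub_zero, scalar_apply,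
    ← smul_one_eq_diagonal, smul_mulVec, one_mulVec, dotProduct_smul, smul_eq_mul, Complex.mul_im,
    ← him]
  simpa using mul_pos hz hre

end StrictlyDissipative

section ChoiceSum

variable {ι : Type*} {κ : ι → Type*} [DecidableEq ι]

lemma sum_sum_update [Fintype ι] [∀ i, Fintype (κ i)] {S : Type*} [AddCommMonoid S]
    (j : ι) (h : (∀ i, κ i) → S) :
    ∑ k, ∑ c, h (update c j k) = Fintype.card (κ j) • ∑ c, h c := by
  let swap : κ j × (∀ i, κ i) → κ j × (∀ i, κ i) := fun x => (x.2 j, update x.2 j x.1)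
  have hswap : Involutive swap := fun x => by simp [swap]
  rw [← Fintype.sum_prod_type', hswap.bijective.sum_comp fun x => h x.2, Fintype.sum_prod_type]
  simp

variable [∀ i, DecidableEq (κ i)]

/-- The set of elements `c i` of the disjoint union `Σ i, κ i`, one for each block `i ∈ T`. -/
def selection (c : ∀ i, κ i) (T : Finset ι) : Finset (Σ i, κ i) :=
  T.image fun i => ⟨i, c i⟩

lemma fst_mem_of_mem_selection {c : ∀ i, κ i} {T : Finset ι} {p : Σ i, κ i}
    (hp : p ∈ selection c T) : p.1 ∈ T := by
  obtain ⟨i, hi, rfl⟩ := Finset.mem_image.mp hp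
  exact hi

lemma union_selection_insert_update (c : ∀ i, κ i) {T : Finset ι} {j : ι} (hj : j ∉ T) (k : κ j)
    (Y : Finset (Σ i, κ i)) :
    Y ∪ selection (update c j k) (insert j T) = insert ⟨j, k⟩ Y ∪ selection c T := by
  have hT : selection (update c j k) T = selection c T :=
    Finset.image_congr fun i hi => by
      rw [update_of_ne (ne_of_mem_of_not_mem hi hj)]
  rw [selection, Finset.image_insert, ← selection, hT, update_self, Finset.union_insert,
    Finset.insert_union]

variable [Fintype ι] [∀ i, Fintype (κ i)]

/-- The sum of `G (Y ∪ {c i | i ∈ T})` over all `c : ∀ i, κ i`. Up to the number of values of `c`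
outside `T`, this is the conditional expectation of `G` at a uniformly random transversal, given
the part `Y` of it lying outside the blocks in `T`. -/
def choiceSum {S : Type*} [AddCommMonoid S] (G : Finset (Σ i, κ i) → S) (T : Finset ι)
    (Y : Finset (Σ i, κ i)) : S :=
  ∑ c, G (Y ∪ selection c T)

lemma choiceSum_empty {S : Type*} [AddCommMonoid S] (G : Finset (Σ i, κ i) → S)
    (Y : Finset (Σ i, κ i)) : choiceSum G ∅ Y = Fintype.card (∀ i, κ i) • G Y := by
  simp [choiceSum, selection]

lemma sum_choiceSum_insert {S : Type*} [AddCommMonoid S] (G : Finset (Σ i, κ i) → S)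
    {T : Finset ι} {j : ι} (hj : j ∉ T) (Y : Finset (Σ i, κ i)) :
    ∑ k, choiceSum G T (insert ⟨j, k⟩ Y) = Fintype.card (κ j) • choiceSum G (insert j T) Y := by
  simp only [choiceSum, ← union_selection_insert_update _ hj]
  exact sum_sum_update j fun c => G (Y ∪ selection c (insert j T))

lemma choiceSum_principalMinor_add_single {R : Type*} [CommRing R]
    (M : Matrix (Σ i, κ i) (Σ i, κ i) R) {T : Finset ι} {Y : Finset (Σ i, κ i)} {p : Σ i, κ i}
    (hpT : p.1 ∉ T) (hpY : p ∉ Y) (w : R) :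
    choiceSum (principalMinor (M + single p p w)) T (insert p Y) =
      choiceSum (principalMinor M) T (insert p Y) + w * choiceSum (principalMinor M) T Y := by
  simp only [choiceSum, Finset.mul_sum, ← Finset.sum_add_distrib, Finset.insert_union]
  refine Finset.sum_congr rfl fun c _ => principalMinor_add_single_insert M ?_ w
  exact Finset.notMem_union.mpr ⟨hpY, fun h => hpT (fst_mem_of_mem_selection h)⟩

lemma StrictlyDissipative.choiceSum_div_im_pos {M : Matrix (Σ i, κ i) (Σ i, κ i) ℂ}
    (hM : StrictlyDissipative M) {T : Finset ι} {Y : Finset (Σ i, κ i)} {p : Σ i, κ i}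
    (hpT : p.1 ∉ T) (hpY : p ∉ Y) (hY : choiceSum (principalMinor M) T Y ≠ 0)
    (hT : ∀ {M' : Matrix (Σ i, κ i) (Σ i, κ i) ℂ}, StrictlyDissipative M' →
      choiceSum (principalMinor M') T (insert p Y) ≠ 0) :
    0 < (choiceSum (principalMinor M) T (insert p Y) / choiceSum (principalMinor M) T Y).im := by
  by_contra! him
  -- Otherwise adding `-ρ` at the diagonal entry `p` preserves strict dissipativity, but it makes
  -- the sum over the sets containing `p` vanish.
  set ρ := choiceSum (principalMinor M) T (insert p Y) / choiceSum (principalMinor M) T Y with hρ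
  refine hT (hM.add_single p (w := -ρ) (by simpa using him)) ?_
  rw [choiceSum_principalMinor_add_single M hpT hpY, neg_mul, hρ, div_mul_cancel₀ _ hY,
    add_neg_cancel]

lemma StrictlyDissipative.choiceSum_ne_zero [∀ i, Nonempty (κ i)]
    {M : Matrix (Σ i, κ i) (Σ i, κ i) ℂ} (hM : StrictlyDissipative M) {T : Finset ι}
    {Y : Finset (Σ i, κ i)} (hY : ∀ p ∈ Y, p.1 ∉ T) : choiceSum (principalMinor M) T Y ≠ 0 := by
  induction T using Finset.induction_on generalizing M Y with
  | empty =>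
    rw [choiceSum_empty]
    exact smul_ne_zero Fintype.card_ne_zero (hM.principalMinor_ne_zero Y)
  | insert j T hj ih =>
    simp only [Finset.mem_insert, not_or] at hY
    have hYT : choiceSum (principalMinor M) T Y ≠ 0 := ih hM fun p hp => (hY p hp).2
    have ratio_pos (k : κ j) : 0 < (choiceSum (principalMinor M) T (insert ⟨j, k⟩ Y) /
        choiceSum (principalMinor M) T Y).im := by
      refine hM.choiceSum_div_im_pos hj (fun h => (hY _ h).1 rfl) hYT fun hM' => ih hM' ?_
      exact Finset.forall_mem_insert _ _ _ |>.mpr ⟨hj, fun p hp => (hY p hp).2⟩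
    intro hzero
    have hsum := sum_choiceSum_insert (principalMinor M) hj Y
    rw [hzero, smul_zero] at hsum
    have := Finset.sum_pos (fun k _ => ratio_pos k) Finset.univ_nonempty
    rw [← Complex.im_sum, ← Finset.sum_div, hsum, zero_div, Complex.zero_im] at this
    exact this.false

end ChoiceSum

section LargestRoot

lemma aeval_complex_ofReal (p : ℝ[X]) (x : ℝ) : aeval (x : ℂ) p = p.eval x :=
  aeval_algebraMap_apply_eq_algebraMap_eval x p

lemma im_eq_zero_of_aeval_eq_zero {p : ℝ[X]} (hp : ∀ z : ℂ, 0 < z.im → aeval z p ≠ 0) {z : ℂ}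
    (hz : aeval z p = 0) : z.im = 0 := by
  by_contra hne
  rcases lt_or_gt_of_ne hne with hneg | hpos
  · refine hp (starRingEnd ℂ z) (by simpa using hneg) ?_
    rw [aeval_conj, hz, map_zero]
  · exact hp z hpos hz

/-- `f / b` maps the open upper half-plane into itself. For real-rooted `f` and `b` this
forces their roots to interlace. -/
def InProperPosition (b f : ℝ[X]) : Prop :=
  ∀ z : ℂ, 0 < z.im → 0 < (aeval z f / aeval z b).im

lemma nonneg_of_hasDerivAt_of_forall_pos_le {φ : ℝ → ℝ} {φ' x : ℝ} (hφ : HasDerivAt φ φ' x)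
    (hmin : ∀ y, x < y → φ x ≤ φ y) : 0 ≤ φ' := by
  have hlocal : IsLocalMinOn φ (Set.Ioi x) x := eventually_mem_nhdsWithin.mono hmin
  simpa using hlocal.hasFDerivWithinAt_nonneg hφ.hasDerivWithinAt.hasFDerivWithinAt
    (one_mem_posTangentConeAt_iff_mem_closure.mpr (by simp))

lemma InProperPosition.wronskian_nonneg {b f : ℝ[X]} (h : InProperPosition b f) (x : ℝ) :
    0 ≤ (wronskian b f).eval x := by
  -- `φ t` is the imaginary part of `f z * conj (b z)` at `z = x + i t`: it vanishes at `t = 0`,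
  -- is nonnegative for `t > 0`, and its derivative at `0` is the Wronskian.
  let φ : ℝ → ℝ := fun t =>
    (aeval (x + t * Complex.I) f * aeval (x + t * -Complex.I) b : ℂ).im
  have hline (c : ℂ) : HasDerivAt (fun t : ℝ => (x + t * c : ℂ)) c 0 := by
    simpa using ((Complex.ofRealCLM.hasDerivAt (x := (0 : ℝ))).mul_const c).const_add (x : ℂ)
  have hpoly (q : ℝ[X]) (c : ℂ) :
      HasDerivAt (fun t : ℝ => aeval (x + t * c : ℂ) q) (q.derivative.eval x * c : ℂ) 0 := by
    have := (q.hasDerivAt_aeval (x + (0 : ℝ) * c : ℂ)).comp (0 : ℝ) (hline c)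
    simpa [Function.comp_def, aeval_complex_ofReal] using this
  have hφ : HasDerivAt φ ((wronskian b f).eval x) 0 := by
    refine (Complex.imCLM.hasFDerivAt.comp_hasDerivAt (0 : ℝ)
      ((hpoly f Complex.I).mul (hpoly b (-Complex.I)))).congr_deriv ?_
    simp only [Complex.ofReal_zero, zero_mul, mul_neg, neg_zero, add_zero, aeval_complex_ofReal,
      Complex.imCLM_apply, Complex.add_im, Complex.mul_im, Complex.mul_re, Complex.ofReal_re,
      Complex.ofReal_im, Complex.I_re, Complex.I_im, Complex.neg_im, wronskian, eval_sub, eval_mul]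
    ring
  refine nonneg_of_hasDerivAt_of_forall_pos_le hφ fun t ht => ?_
  have hφ0 : φ 0 = 0 := by simp [φ, aeval_complex_ofReal]
  set z : ℂ := x + t * Complex.I with hz
  have hconj : (x + t * -Complex.I : ℂ) = starRingEnd ℂ z := by simp [hz]
  have hzpos := h z (by simpa [hz] using ht)
  have hbz : aeval z b ≠ 0 := fun h0 => by simp [h0] at hzpos
  have hratio : aeval z f * starRingEnd ℂ (aeval z b) =
      aeval z f / aeval z b * (Complex.normSq (aeval z b) : ℂ) := by
    rw [← Complex.mul_conj]
    field_simp
  rw [hφ0]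
  simp only [φ]
  rw [hconj, aeval_conj, ← hz, hratio, Complex.im_mul_ofReal]
  exact mul_nonneg hzpos.le (Complex.normSq_nonneg _)

lemma InProperPosition.monotoneOn_div {b f : ℝ[X]} (h : InProperPosition b f) {a : ℝ}
    (hb : ∀ x, a < x → 0 < b.eval x) :
    MonotoneOn (fun x => f.eval x / b.eval x) (Set.Ioi a) := by
  have hderiv (x : ℝ) (hx : a < x) : HasDerivAt (fun x => f.eval x / b.eval x)
      ((wronskian b f).eval x / b.eval x ^ 2) x := by
    refine ((f.hasDerivAt x).fun_div (b.hasDerivAt x) (hb x hx).ne').congr_deriv ?_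
    rw [wronskian, eval_sub, eval_mul, eval_mul]
    ring
  exact monotoneOn_of_hasDerivWithinAt_nonneg (convex_Ioi a)
    (fun x hx => (hderiv x hx).continuousAt.continuousWithinAt)
    (fun x hx => (hderiv x (interior_subset hx)).hasDerivWithinAt)
    (fun x _ => div_nonneg (h.wronskian_nonneg x) (sq_nonneg _))

lemma InProperPosition.eval_mul_eval_le {b f : ℝ[X]} (h : InProperPosition b f) {a x : ℝ}
    (hb : ∀ y, a < y → 0 < b.eval y) (hax : a < x) :
    f.eval a * b.eval x ≤ f.eval x * b.eval a := by
  have hle : ∀ y ∈ Set.Ioo a x, f.eval y * b.eval x ≤ f.eval x * b.eval y := fun y hy =>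
    (div_le_div_iff₀ (hb y hy.1) (hb x hax)).mp (h.monotoneOn_div hb hy.1 hax hy.2.le)
  refine le_on_closure hle (by fun_prop) (by fun_prop) ?_
  rw [closure_Ioo hax.ne]
  exact Set.left_mem_Icc.mpr hax.le

lemma eval_pos_of_eventually_pos {p : ℝ[X]} (hp : ∀ᶠ x in atTop, 0 < p.eval x) {a : ℝ}
    (hroot : ∀ y, a ≤ y → ¬ p.IsRoot y) : 0 < p.eval a := by
  by_contra! ha
  obtain ⟨y, hy, hay⟩ := (hp.and (eventually_ge_atTop a)).exists
  obtain ⟨x, hx, hx0⟩ := intermediate_value_Icc hay p.continuous.continuousOn ⟨ha, hy.le⟩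
  exact hroot x hx.1 hx0

lemma exists_ge_forall_gt_not_isRoot {p : ℝ[X]} (hp : p ≠ 0) (a : ℝ) :
    ∃ m, a ≤ m ∧ (m = a ∨ p.IsRoot m) ∧ ∀ x, m < x → ¬ p.IsRoot x := by
  obtain ⟨m, hm, hmax⟩ :=
    (insert a p.roots.toFinset).exists_max_image id (Finset.insert_nonempty _ _)
  simp only [Finset.mem_insert, Multiset.mem_toFinset, mem_roots hp,
    id_eq] at hm hmax
  exact ⟨m, hmax a (.inl rfl), hm, fun x hx hroot => (hmax x (.inr hroot)).not_gt hx⟩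

/-- Every real root of `p` is at most some real root of `q`; for `q` with a real root, this
compares the largest real roots of `p` and `q`. -/
def LargestRootLE (p q : ℝ[X]) : Prop :=
  ∀ x, p.IsRoot x → ∃ y, q.IsRoot y ∧ x ≤ y

lemma LargestRootLE.trans {p q s : ℝ[X]} (hpq : LargestRootLE p q) (hqs : LargestRootLE q s) :
    LargestRootLE p s := fun x hx => by
  obtain ⟨y, hy, hxy⟩ := hpq x hx
  obtain ⟨w, hw, hyw⟩ := hqs y hy
  exact ⟨w, hw, hxy.trans hyw⟩

lemma largestRootLE_nsmul_self {m : ℕ} (hm : m ≠ 0) (p : ℝ[X]) :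
    LargestRootLE p (m • p) ∧ LargestRootLE (m • p) p := by
  have hroot (x : ℝ) : (m • p).IsRoot x ↔ p.IsRoot x := by simp [IsRoot, hm]
  exact ⟨fun x hx => ⟨x, (hroot x).mpr hx, le_rfl⟩, fun x hx => ⟨x, (hroot x).mp hx, le_rfl⟩⟩

lemma LargestRootLE.exists_re_le {p q : ℝ[X]} (hpq : LargestRootLE p q)
    (hp : ∀ z : ℂ, aeval z p = 0 → z.im = 0) {x : ℂ} (hx : aeval x p = 0) :
    ∃ y : ℂ, aeval y q = 0 ∧ x.re ≤ y.re := by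
  have hx_re : (x.re : ℂ) = x := Complex.ext rfl (hp x hx).symm
  rw [← hx_re, aeval_complex_ofReal, Complex.ofReal_eq_zero] at hx
  obtain ⟨y, hy, hxy⟩ := hpq x.re hx
  exact ⟨y, by rw [aeval_complex_ofReal, hy.eq_zero, Complex.ofReal_zero], hxy⟩

lemma exists_largestRootLE_sum {κ : Type*} [Fintype κ] [Nonempty κ] {f : κ → ℝ[X]} {b : ℝ[X]}
    (hbf : ∀ k, InProperPosition b (f k)) (hb : ∀ᶠ x in atTop, 0 < b.eval x)
    (hf : ∀ᶠ x in atTop, 0 < (∑ k, f k).eval x) : ∃ k, LargestRootLE (f k) (∑ k, f k) := by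
  by_contra! hcon
  -- Every `f k` then has a root `x k` above all roots of the sum. At the maximum `m` of the least
  -- `x k` and the roots of `b`, the sum is positive although every summand is nonpositive.
  simp only [LargestRootLE, not_forall, not_exists, not_and, not_le, exists_prop] at hcon
  choose x hx_root hx_gt using hcon
  obtain ⟨k₀, hk₀⟩ := Finite.exists_min x
  have hb0 : b ≠ 0 := by
    rintro rfl
    simpa using hb.exists
  obtain ⟨m, hm_ge, hm_eq, hm_top⟩ := exists_ge_forall_gt_not_isRoot hb0 (x k₀)
  have hb_pos (y : ℝ) (hy : m < y) : 0 < b.eval y :=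
    eval_pos_of_eventually_pos hb fun t ht => hm_top t (hy.trans_le ht)
  have hsum_pos : 0 < (∑ k, f k).eval m :=
    eval_pos_of_eventually_pos hf fun y hy hroot =>
      (hx_gt k₀ y hroot).not_ge (hm_ge.trans hy)
  refine hsum_pos.not_ge ?_
  rw [eval_finsetSum]
  refine Finset.sum_nonpos fun k _ => ?_
  have hle {y : ℝ} (hy : m < y) (hzero : (f k).eval y * b.eval m = 0) : (f k).eval m ≤ 0 :=
    nonpos_of_mul_nonpos_left (((hbf k).eval_mul_eval_le hb_pos hy).trans_eq hzero) (hb_pos y hy)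
  rcases hm_eq with rfl | hm_root
  · rcases (hk₀ k).eq_or_lt with heq | hlt
    · exact (heq ▸ hx_root k).le
    · exact hle hlt (by rw [hx_root k, zero_mul])
  · exact hle (lt_add_one m) (by rw [hm_root, mul_zero])

end LargestRoot

section Hermitian

section RealCharpoly

variable {α : Type*} [Fintype α] [DecidableEq α] {A : Matrix α α ℂ}

/-- The characteristic polynomial of a Hermitian matrix, as a real polynomial. -/
noncomputable def realCharpoly (hA : A.IsHermitian) : ℝ[X] :=
  ∏ i, (X - C (hA.eigenvalues i))

lemma aeval_realCharpoly (hA : A.IsHermitian) (z : ℂ) :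
    aeval z (realCharpoly hA) = A.charpoly.eval z := by
  simp [realCharpoly, hA.charpoly_eq, eval_prod]

lemma eventually_pos_eval_realCharpoly (hA : A.IsHermitian) :
    ∀ᶠ x in atTop, 0 < (realCharpoly hA).eval x := by
  filter_upwards [eventually_all.mpr fun i => eventually_gt_atTop (hA.eigenvalues i)] with x hx
  rw [realCharpoly, eval_prod]
  exact Finset.prod_pos fun i _ => by simpa using hx i

end RealCharpoly

variable {ι : Type*} {κ : ι → Type*} [DecidableEq ι] [∀ i, DecidableEq (κ i)] [Fintype ι]
  [∀ i, Fintype (κ i)] {B : Matrix (Σ i, κ i) (Σ i, κ i) ℂ}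

/-- The characteristic polynomial of the principal submatrix of `B` on `Y`. -/
noncomputable def minorCharpoly (hB : B.IsHermitian) (Y : Finset (Σ i, κ i)) : ℝ[X] :=
  realCharpoly (hB.submatrix ((↑) : Y → Σ i, κ i))

lemma aeval_minorCharpoly (hB : B.IsHermitian) (Y : Finset (Σ i, κ i)) (z : ℂ) :
    aeval z (minorCharpoly hB Y) = principalMinor (scalar _ z - B) Y := by
  rw [minorCharpoly, aeval_realCharpoly, eval_charpoly, principalMinor]
  congr 1
  ext p q
  simp only [scalar_apply, Matrix.sub_apply, submatrix_apply, diagonal_apply, Subtype.ext_iff]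

lemma aeval_choiceSum_minorCharpoly (hB : B.IsHermitian) (T : Finset ι) (Y : Finset (Σ i, κ i))
    (z : ℂ) : aeval z (choiceSum (minorCharpoly hB) T Y) =
      choiceSum (principalMinor (scalar _ z - B)) T Y := by
  simp only [choiceSum, map_sum, aeval_minorCharpoly]

variable [∀ i, Nonempty (κ i)]

lemma eventually_pos_eval_choiceSum_minorCharpoly (hB : B.IsHermitian) (T : Finset ι)
    (Y : Finset (Σ i, κ i)) :
    ∀ᶠ x in atTop, 0 < (choiceSum (minorCharpoly hB) T Y).eval x := by
  have hpos := eventually_all.mpr fun c : ∀ i, κ i =>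
    eventually_pos_eval_realCharpoly
      (hB.submatrix ((↑) : ↥(Y ∪ selection c T) → Σ i, κ i))
  filter_upwards [hpos] with x hx
  rw [choiceSum, eval_finsetSum]
  exact Finset.sum_pos (fun c _ => hx c) Finset.univ_nonempty

lemma aeval_choiceSum_minorCharpoly_ne_zero (hB : B.IsHermitian) {T : Finset ι}
    {Y : Finset (Σ i, κ i)} (hY : ∀ p ∈ Y, p.1 ∉ T) {z : ℂ} (hz : 0 < z.im) :
    aeval z (choiceSum (minorCharpoly hB) T Y) ≠ 0 := by
  rw [aeval_choiceSum_minorCharpoly]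
  exact (strictlyDissipative_scalar_sub hB hz).choiceSum_ne_zero hY

lemma inProperPosition_choiceSum_insert (hB : B.IsHermitian) {T : Finset ι}
    {Y : Finset (Σ i, κ i)} (hY : ∀ p ∈ Y, p.1 ∉ T) {p : Σ i, κ i} (hpT : p.1 ∉ T) (hpY : p ∉ Y) :
    InProperPosition (choiceSum (minorCharpoly hB) T Y)
      (choiceSum (minorCharpoly hB) T (insert p Y)) := by
  intro z hz
  have hM := strictlyDissipative_scalar_sub hB hz
  simp only [aeval_choiceSum_minorCharpoly]
  exact hM.choiceSum_div_im_pos hpT hpY (hM.choiceSum_ne_zero hY) fun hM' =>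
    hM'.choiceSum_ne_zero ((Finset.forall_mem_insert _ _ _).mpr ⟨hpT, hY⟩)

lemma exists_largestRootLE_choiceSum (hB : B.IsHermitian) {T : Finset ι}
    {Y : Finset (Σ i, κ i)} (hY : ∀ p ∈ Y, p.1 ∉ T) :
    ∃ c, LargestRootLE (minorCharpoly hB (Y ∪ selection c T))
      (choiceSum (minorCharpoly hB) T Y) := by
  induction T using Finset.induction_on generalizing Y with
  | empty =>
    refine ⟨Classical.arbitrary _, ?_⟩
    rw [choiceSum_empty, selection, Finset.image_empty, Finset.union_empty]
    exact (largestRootLE_nsmul_self Fintype.card_ne_zero _).1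
  | insert j T hj ih =>
    simp only [Finset.mem_insert, not_or] at hY
    have hYT (p : Σ i, κ i) (hp : p ∈ Y) : p.1 ∉ T := (hY p hp).2
    have hsum := sum_choiceSum_insert (minorCharpoly hB) hj Y
    have hsum_pos : ∀ᶠ x in atTop,
        0 < (∑ k, choiceSum (minorCharpoly hB) T (insert ⟨j, k⟩ Y)).eval x := by
      filter_upwards [eventually_pos_eval_choiceSum_minorCharpoly hB (insert j T) Y] with x hx
      simpa [hsum, Fintype.card_pos] using hx
    obtain ⟨k, hk⟩ := exists_largestRootLE_sum
      (fun k => inProperPosition_choiceSum_insert hB hYT hj fun h => (hY ⟨j, k⟩ h).1 rfl)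
      (eventually_pos_eval_choiceSum_minorCharpoly hB T Y) hsum_pos
    obtain ⟨c, hc⟩ := ih (Y := insert ⟨j, k⟩ Y) ((Finset.forall_mem_insert _ _ _).mpr ⟨hj, hYT⟩)
    refine ⟨update c j k, ?_⟩
    rw [union_selection_insert_update c hj]
    rw [hsum] at hk
    exact hc.trans (hk.trans (largestRootLE_nsmul_self Fintype.card_ne_zero _).2)

end Hermitian

lemma paving_eq_submatrix_blockDiagonal {n r : ℕ} (A : Matrix (Fin n) (Fin n) ℂ)
    (c : Fin n → Fin r) :
    paving A c =
      (blockDiagonal fun _ : Fin r => A).submatrix (fun i => (i, c i)) (fun i => (i, c i)) :=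
  rfl

theorem paving_interlacing_family_general {ι α : Type*} {κ : ι → Type*} [Fintype ι]
    [DecidableEq ι] [∀ i, Fintype (κ i)] [∀ i, Nonempty (κ i)] {B : Matrix α α ℂ}
    (hB : B.IsHermitian) (s : ∀ i, κ i → α) :
    (∀ z : ℂ, (∑ c : ∀ i, κ i,
        (B.submatrix (fun i => s i (c i)) (fun i => s i (c i))).charpoly).IsRoot z → z.im = 0) ∧
    ∃ c : ∀ i, κ i, ∀ x : ℂ,
      (B.submatrix (fun i => s i (c i)) (fun i => s i (c i))).charpoly.IsRoot x →
      ∃ y : ℂ, (∑ c' : ∀ i, κ i,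
        (B.submatrix (fun i => s i (c' i)) (fun i => s i (c' i))).charpoly).IsRoot y ∧
        x.re ≤ y.re := by
  classical
  have hB' := hB.submatrix fun p : Σ i, κ i => s p.1 p.2
  have minor_root (c : ∀ i, κ i) (z : ℂ) :
      (B.submatrix (fun i => s i (c i)) (fun i => s i (c i))).charpoly.eval z =
        aeval z (minorCharpoly hB' (∅ ∪ selection c Finset.univ)) := by
    rw [Finset.empty_union, minorCharpoly, aeval_realCharpoly, selection,
      charpoly_submatrix_image_univ _ fun i j h => congrArg Sigma.fst h]
    rfl
  have sum_root (z : ℂ) :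
      (∑ c : ∀ i, κ i, (B.submatrix (fun i => s i (c i)) (fun i => s i (c i))).charpoly).eval z =
        aeval z (choiceSum (minorCharpoly hB') Finset.univ ∅) := by
    simp only [eval_finsetSum, minor_root, choiceSum, map_sum]
  have hdisj : ∀ p ∈ (∅ : Finset (Σ i, κ i)), p.1 ∉ Finset.univ := by simp
  obtain ⟨c, hc⟩ := exists_largestRootLE_choiceSum hB' hdisj
  simp only [IsRoot, minor_root, sum_root]
  refine ⟨fun z => im_eq_zero_of_aeval_eq_zero fun w =>
    aeval_choiceSum_minorCharpoly_ne_zero hB' hdisj, c, fun x => hc.exists_re_le fun z => ?_⟩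
  refine im_eq_zero_of_aeval_eq_zero fun w hw => ?_
  rw [aeval_minorCharpoly]
  exact (strictlyDissipative_scalar_sub hB' hw).principalMinor_ne_zero _

/-- For a Hermitian matrix `A`, the sum of the characteristic polynomials of all `r`-pavings
of `A` has only real roots, and some `r`-paving has all of its eigenvalues (roots of its
characteristic polynomial) at most the largest root of the sum. -/
theorem paving_interlacing_family {n : ℕ} (hn : 1 ≤ n) (r : ℕ) (hr : 1 ≤ r)
    (A : Matrix (Fin n) (Fin n) ℂ) (hA : A.IsHermitian) :
    (∀ z : ℂ, (∑ c : Fin n → Fin r, (paving A c).charpoly).IsRoot z → z.im = 0) ∧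
    (∃ c : Fin n → Fin r, ∀ x : ℂ, (paving A c).charpoly.IsRoot x →
      ∃ y : ℂ, (∑ c' : Fin n → Fin r, (paving A c').charpoly).IsRoot y ∧ x.re ≤ y.re) := by
  have : Nonempty (Fin r) := ⟨⟨0, hr⟩⟩
  have hB : (blockDiagonal fun _ : Fin r => A).IsHermitian :=
    isHermitian_blockDiagonal_iff.mpr fun _ => hA
  simp only [paving_eq_submatrix_blockDiagonal]
  exact paving_interlacing_family_general hB fun i k => (i, k)
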